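/- There are positive constants c and C such that for every integer m: c · (|m|+1)^{1/4} ≤ |Σ_{k=0}^∞ Γ_k^m α_{|m|+2k}^m P_{|m|+2k}^{|m|}(0)| ≤ C · (|m|+1)^{1/4}; in particular this sum is nonzero for every m. -/

import Mathlib

noncomputable section

open MeasureTheory Real Filter

/-- The Legendre polynomial of degree `n`, via Rodrigues' formula. -/
def legendreP (n : ℕ) : Polynomial ℝ :=
  Polynomial.C ((2 ^ n * n.factorial : ℝ)⁻¹) *
    Polynomial.derivative^[n] ((Polynomial.X ^ 2 - 1) ^ n)

/-- The associated Legendre function `P_l^m` (with Condon–Shortley phase),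
so that `P_{|m|+2k}^{|m|}(0) = (-1)^{|m|+k} (2|m|+2k-1)!!/(2k)!!`. -/
def assocLegendre (l m : ℕ) (x : ℝ) : ℝ :=
  (-1 : ℝ) ^ m * (1 - x ^ 2) ^ ((m : ℝ) / 2) *
    (Polynomial.derivative^[m] (legendreP l)).eval x

/-- The normalizing constant `α_l^m` of the spherical harmonics. -/
def alphaY (l : ℕ) (m : ℤ) : ℝ :=
  (-1 : ℝ) ^ ((m + |m|) / 2) *
    Real.sqrt ((2 * l + 1) * (l - m.natAbs).factorial /
      (4 * Real.pi * (l + m.natAbs).factorial))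

/-- The spherical harmonic `Y_l^m` in latitude/longitude coordinates `(θ, φ)`. -/
def Ylm (l : ℕ) (m : ℤ) (θ φ : ℝ) : ℂ :=
  ((alphaY l m * assocLegendre l m.natAbs (Real.sin θ) : ℝ) : ℂ) *
    Complex.exp (Complex.I * m * φ)

/-- The surface measure `dS = cos θ dθ dφ` of the unit sphere, in the coordinate box
`[-π/2, π/2] × [-π, π)`. -/
def sphereMeasure : Measure (ℝ × ℝ) :=
  ((volume : Measure (ℝ × ℝ)).restrict
      (Set.Icc (-(Real.pi / 2)) (Real.pi / 2) ×ˢ Set.Ico (-Real.pi) Real.pi)).withDensity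
    fun p => ENNReal.ofReal (Real.cos p.1)

/-- The Fourier–Laplace coefficient `ψ̂_l^m = ∫_𝕊 ψ conj(Y_l^m) dS`. -/
def flCoeff (ψ : ℝ → ℝ → ℂ) (l : ℕ) (m : ℤ) : ℂ :=
  ∫ p : ℝ × ℝ, ψ p.1 p.2 * (starRingEnd ℂ) (Ylm l m p.1 p.2) ∂sphereMeasure

/-- Membership in the fractional Sobolev space `H^s(𝕊)`:
`ψ ∈ L²(𝕊)` and `Σ_{l,m} (l+1)^{2s} |ψ̂_l^m|² < ∞`.
(The coefficients with `|m| > l` vanish automatically.) -/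
def MemHs (s : ℝ) (ψ : ℝ → ℝ → ℂ) : Prop :=
  MeasureTheory.MemLp (fun p : ℝ × ℝ => ψ p.1 p.2) 2 sphereMeasure ∧
    Summable fun p : ℕ × ℤ =>
      ((p.1 : ℝ) + 1) ^ (2 * s) * ‖flCoeff ψ p.1 p.2‖ ^ 2

/-- The `H^s(𝕊)` norm. -/
def HsNorm (s : ℝ) (ψ : ℝ → ℝ → ℂ) : ℝ :=
  Real.sqrt (∑' p : ℕ × ℤ, ((p.1 : ℝ) + 1) ^ (2 * s) * ‖flCoeff ψ p.1 p.2‖ ^ 2)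

/-- Axially symmetric functions on the sphere: functions not depending on the longitude. -/
def Axial (ψ : ℝ → ℝ → ℂ) : Prop := ∀ θ φ₁ φ₂, ψ θ φ₁ = ψ θ φ₂

/-- Spherical (latitude/longitude) coordinates on the unit sphere of `ℝ³`. -/
def sphCoord (θ φ : ℝ) : EuclideanSpace ℝ (Fin 3) :=
  (WithLp.equiv 2 (Fin 3 → ℝ)).symm
    ![Real.cos θ * Real.cos φ, Real.cos θ * Real.sin φ, Real.sin θ]

/-- The open exterior `Ω` of the unit sphere. -/
def extDomain : Set (EuclideanSpace ℝ (Fin 3)) := {x | 1 < ‖x‖}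

/-- The closed exterior `cl Ω` of the unit sphere. -/
def closedExt : Set (EuclideanSpace ℝ (Fin 3)) := {x | 1 ≤ ‖x‖}

/-- The Laplacian of a function on `ℝ³`. -/
def lap {F : Type*} [NormedAddCommGroup F] [NormedSpace ℝ F]
    (u : EuclideanSpace ℝ (Fin 3) → F) (x : EuclideanSpace ℝ (Fin 3)) : F :=
  ∑ i : Fin 3, fderiv ℝ (fun y => fderiv ℝ u y (EuclideanSpace.single i 1)) x
    (EuclideanSpace.single i 1)

/-- The radial derivative `u_r` at a point of the unit sphere (taken from outside). -/
def radialDeriv {F : Type*} [NormedAddCommGroup F] [NormedSpace ℝ F]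
    (u : EuclideanSpace ℝ (Fin 3) → F) (θ φ : ℝ) : F :=
  derivWithin (fun r : ℝ => u (r • sphCoord θ φ)) (Set.Ici 1) 1

/-- The latitudinal derivative `u_θ` at a point of the unit sphere. -/
def thetaDeriv {F : Type*} [NormedAddCommGroup F] [NormedSpace ℝ F]
    (u : EuclideanSpace ℝ (Fin 3) → F) (θ φ : ℝ) : F :=
  deriv (fun t => u (sphCoord t φ)) θ

/-- The boundary trace on the unit sphere of a real-valued function, in coordinates. -/
def traceR (u : EuclideanSpace ℝ (Fin 3) → ℝ) (θ φ : ℝ) : ℂ := (u (sphCoord θ φ) : ℂ)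

/-- The boundary trace on the unit sphere of a complex-valued function, in coordinates. -/
def traceC (u : EuclideanSpace ℝ (Fin 3) → ℂ) (θ φ : ℝ) : ℂ := u (sphCoord θ φ)

/-- The Fourier coefficient on the equator `ℰ`. -/
def equatorCoeff (h : ℝ → ℂ) (m : ℤ) : ℂ :=
  (1 / (2 * Real.pi)) * ∫ φ in (-Real.pi)..Real.pi, h φ * Complex.exp (-(Complex.I * m * φ))

/-- Membership in the fractional Sobolev space `H^s(ℰ)` on the equator. -/
def MemHsE (s : ℝ) (h : ℝ → ℂ) : Prop :=
  MeasureTheory.MemLp h 2 (volume.restrict (Set.Ico (-Real.pi) Real.pi)) ∧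
    Summable fun m : ℤ => ((m.natAbs : ℝ) + 1) ^ (2 * s) * ‖equatorCoeff h m‖ ^ 2

/-- The `H^s(ℰ)` norm. -/
def HsNormE (s : ℝ) (h : ℝ → ℂ) : ℝ :=
  Real.sqrt (∑' m : ℤ, ((m.natAbs : ℝ) + 1) ^ (2 * s) * ‖equatorCoeff h m‖ ^ 2)

/-- The constant `β_l^m`. -/
def betaLM (l : ℕ) (m : ℤ) : ℝ :=
  Real.sqrt (((l : ℝ) - m.natAbs) * ((l : ℝ) + m.natAbs) /
    ((2 * (l : ℝ) - 1) * (2 * (l : ℝ) + 1)))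

/-- The constant `γ_l^m = -(l+1)β_l^m / (3(l+2)β_{l+1}^m)`. -/
def gammaLM (l : ℕ) (m : ℤ) : ℝ :=
  -(((l : ℝ) + 1) * betaLM l m) / (3 * ((l : ℝ) + 2) * betaLM (l + 1) m)

/-- The product `Γ_k^m = ∏_{j=1}^k γ_{|m|+2j-1}^m` (with `Γ_0^m = 1`). -/
def GammaKM (m : ℤ) (k : ℕ) : ℝ :=
  ∏ j ∈ Finset.Icc 1 k, gammaLM (m.natAbs + 2 * j - 1) m

/-- The value `α_{|m|+2k}^m P_{|m|+2k}^{|m|}(0)`. -/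
def PzeroM (m : ℤ) (k : ℕ) : ℝ :=
  alphaY (m.natAbs + 2 * k) m * assocLegendre (m.natAbs + 2 * k) m.natAbs 0

/-- The coefficient `a_l^m = f̂_l^m / (6(l+2)β_{l+1}^m)`. -/
def aCoef (f : ℝ → ℝ → ℂ) (l : ℕ) (m : ℤ) : ℂ :=
  flCoeff f l m / ((6 * ((l : ℝ) + 2) * betaLM (l + 1) m : ℝ) : ℂ)

/-- The solution of the recurrence `b_{|m|-1}^m = b_{|m|}^m = 0`,
`b_{l+1}^m = γ_l^m b_{l-1}^m + a_l^m`; here `bSeq f m n = b_{|m|-1+n}^m`. -/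
def bSeq (f : ℝ → ℝ → ℂ) (m : ℤ) : ℕ → ℂ
  | 0 => 0
  | 1 => 0
  | n + 2 => ((gammaLM (m.natAbs + n) m : ℝ) : ℂ) * bSeq f m n + aCoef f (m.natAbs + n) m

/-- The coefficient `b_l^m`. -/
def bCoef (f : ℝ → ℝ → ℂ) (l : ℕ) (m : ℤ) : ℂ := bSeq f m (l + 1 - m.natAbs)

/-- The constant `ã^m`. -/
def aTilde (f : ℝ → ℝ → ℂ) (h : ℝ → ℂ) (m : ℤ) : ℂ :=
  (equatorCoeff h m - ∑' k : ℕ, bCoef f (m.natAbs + 2 * k) m * ((PzeroM m k : ℝ) : ℂ)) /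
    (((∑' k : ℕ, GammaKM m k * PzeroM m k : ℝ)) : ℂ)

/-- The coefficient `c_l^m`: `c_{|m|+2k}^m = Γ_k^m ã^m` and `c_{|m|+2k-1}^m = 0`. -/
def cCoef (f : ℝ → ℝ → ℂ) (h : ℝ → ℂ) (l : ℕ) (m : ℤ) : ℂ :=
  if m.natAbs ≤ l ∧ (l - m.natAbs) % 2 = 0 then
    ((GammaKM m ((l - m.natAbs) / 2) : ℝ) : ℂ) * aTilde f h m
  else 0

/-- The boundary trace `v(1, θ, φ)` of the formal series solution. -/
def vTraceS (f : ℝ → ℝ → ℂ) (h : ℝ → ℂ) (θ φ : ℝ) : ℂ :=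
  ∑' p : ℕ × ℤ, (bCoef f p.1 p.2 + cCoef f h p.1 p.2) * Ylm p.1 p.2 θ φ

/-- The latitude of a point of `ℝ³`. -/
def latitude (x : EuclideanSpace ℝ (Fin 3)) : ℝ := Real.arcsin (x 2 / ‖x‖)

/-- The longitude of a point of `ℝ³`. -/
def longitude (x : EuclideanSpace ℝ (Fin 3)) : ℝ :=
  Complex.arg ((x 0 : ℂ) + (x 1 : ℂ) * Complex.I)

/-- The formal series solution `v = Σ (b_l^m + c_l^m) r^{-l-1} Y_l^m(θ, φ)`. -/
def vFun (f : ℝ → ℝ → ℂ) (h : ℝ → ℂ) (x : EuclideanSpace ℝ (Fin 3)) : ℂ :=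
  ∑' p : ℕ × ℤ, (bCoef f p.1 p.2 + cCoef f h p.1 p.2) * ((‖x‖ : ℂ) ^ (-(p.1 : ℤ) - 1)) *
    Ylm p.1 p.2 (latitude x) (longitude x)

/-- `v` is a classical solution of the linearized (oblique derivative) problem
`Δv = 0` in `Ω`, `∇d⋅∇v = -2 sin θ v_r + cos θ v_θ = f/2` on `𝕊`, `v → 0` at infinity,
`v = h` on the equator; complex-valued version. -/
def SolvesObliqueC (v : EuclideanSpace ℝ (Fin 3) → ℂ) (f : ℝ → ℝ → ℂ) (h : ℝ → ℂ) : Prop :=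
  ContDiffOn ℝ 2 v extDomain ∧ ContDiffOn ℝ 1 v closedExt ∧
    (∀ x ∈ extDomain, lap v x = 0) ∧
    (∀ θ ∈ Set.Icc (-(Real.pi / 2)) (Real.pi / 2), ∀ φ : ℝ,
      -2 * (Real.sin θ : ℂ) * radialDeriv v θ φ + (Real.cos θ : ℂ) * thetaDeriv v θ φ
        = f θ φ / 2) ∧
    Filter.Tendsto v (Bornology.cobounded _) (nhds 0) ∧
    (∀ φ : ℝ, v (sphCoord 0 φ) = h φ)

/-- Real-valued version of `SolvesObliqueC`. -/
def SolvesObliqueR (v : EuclideanSpace ℝ (Fin 3) → ℝ) (f : ℝ → ℝ → ℝ) (h : ℝ → ℝ) : Prop :=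
  ContDiffOn ℝ 2 v extDomain ∧ ContDiffOn ℝ 1 v closedExt ∧
    (∀ x ∈ extDomain, lap v x = 0) ∧
    (∀ θ ∈ Set.Icc (-(Real.pi / 2)) (Real.pi / 2), ∀ φ : ℝ,
      -2 * Real.sin θ * radialDeriv v θ φ + Real.cos θ * thetaDeriv v θ φ = f θ φ / 2) ∧
    Filter.Tendsto v (Bornology.cobounded _) (nhds 0) ∧
    (∀ φ : ℝ, v (sphCoord 0 φ) = h φ)

/-!
At `x = 0` the three-term recurrence of the normalized associated Legendre functions
`p_l = α_l^m P_l^{|m|}(0)` loses its middle term and becomes `β_{l+1} p_{l+1} = -β_l p_{l-1}`, while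
`γ_l = -(l+1)/(3(l+2)) · β_l/β_{l+1}`. Hence consecutive terms of the series have ratio
`(l+1)/(3(l+2)) · (β_l/β_{l+1})²`, which lies in `[0, 1/2]`: the terms have constant sign, and the
sum is the first term up to a factor between `1` and `2`. The first term is governed by the Wallis
product `W`, through `(α_{|m|}^m P_{|m|}^{|m|}(0))⁴ = (2|m|+1)/(16π² W |m|)`, and `W` is bounded
above and below by positive constants.
-/

section RatioSeries

theorem eq_prod_range_mul_of_succ {M : Type*} [CommMonoid M] {t ρ : ℕ → M}
    (hsucc : ∀ k, t (k + 1) = ρ k * t k) (k : ℕ) :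
    t k = (∏ i ∈ Finset.range k, ρ i) * t 0 := by
  induction k with
  | zero => simp
  | succ k ih => rw [hsucc, ih, Finset.prod_range_succ_comm, mul_assoc]

theorem prod_range_le_pow {R : Type*} [CommSemiring R] [PartialOrder R] [IsOrderedRing R]
    {ρ : ℕ → R} {q : R} (hρ : ∀ k, 0 ≤ ρ k) (hρq : ∀ k, ρ k ≤ q) (k : ℕ) :
    ∏ i ∈ Finset.range k, ρ i ≤ q ^ k := by
  simpa using Finset.prod_le_prod (s := Finset.range k) (fun i _ => hρ i) (fun i _ => hρq i)

variable {ρ : ℕ → ℝ} {q : ℝ}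

theorem summable_prod_range (hρ : ∀ k, 0 ≤ ρ k) (hρq : ∀ k, ρ k ≤ q) (hq : q < 1) :
    Summable fun k => ∏ i ∈ Finset.range k, ρ i :=
  .of_nonneg_of_le (fun _ => Finset.prod_nonneg fun i _ => hρ i) (prod_range_le_pow hρ hρq)
    (summable_geometric_of_lt_one ((hρ 0).trans (hρq 0)) hq)

theorem one_le_tsum_prod_range (hρ : ∀ k, 0 ≤ ρ k)
    (hs : Summable fun k => ∏ i ∈ Finset.range k, ρ i) :
    1 ≤ ∑' k, ∏ i ∈ Finset.range k, ρ i := by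
  simpa using hs.le_tsum 0 fun _ _ => Finset.prod_nonneg fun i _ => hρ i

theorem tsum_prod_range_le (hρ : ∀ k, 0 ≤ ρ k) (hρq : ∀ k, ρ k ≤ q) (hq : q < 1) :
    ∑' k, ∏ i ∈ Finset.range k, ρ i ≤ (1 - q)⁻¹ := by
  have hq₀ : 0 ≤ q := (hρ 0).trans (hρq 0)
  rw [← tsum_geometric_of_lt_one hq₀ hq]
  exact (summable_prod_range hρ hρq hq).tsum_le_tsum (prod_range_le_pow hρ hρq)
    (summable_geometric_of_lt_one hq₀ hq)

end RatioSeries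

section LegendreAtZero

open Polynomial in
theorem coeff_two_mul_X_sq_sub_one_pow {R : Type*} [CommRing R] (l j : ℕ) :
    ((X ^ 2 - 1 : R[X]) ^ l).coeff (2 * j) = (-1) ^ (l - j) * l.choose j := by
  have hexpand : (X ^ 2 - 1 : R[X]) ^ l = expand R 2 ((X + C (-1)) ^ l) := by
    simp [sub_eq_add_neg]
  rw [hexpand, coeff_expand_mul' two_pos, coeff_X_add_C_pow]

open Polynomial in
theorem eval_zero_iterate_derivative_legendreP (n k : ℕ) :
    (derivative^[n] (legendreP (n + 2 * k))).eval 0 =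
      (-1) ^ k * (2 * n + 2 * k).factorial /
        (2 ^ (n + 2 * k) * (n + k).factorial * k.factorial) := by
  have hcoeff : ((X ^ 2 - 1 : ℝ[X]) ^ (n + 2 * k)).coeff (2 * n + 2 * k) =
      (-1) ^ k * ((n + 2 * k).factorial / ((n + k).factorial * k.factorial)) := by
    rw [← mul_add, coeff_two_mul_X_sq_sub_one_pow, Nat.cast_choose ℝ (by lia),
      show n + 2 * k - (n + k) = k by lia]
  rw [legendreP, iterate_derivative_C_mul, ← Function.iterate_add_apply, eval_mul, eval_C,
    ← coeff_zero_eq_eval_zero, coeff_iterate_derivative, zero_add, Nat.descFactorial_self,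
    show n + (n + 2 * k) = 2 * n + 2 * k by ring, hcoeff, nsmul_eq_mul]
  field

theorem assocLegendre_add_two_mul_zero (n k : ℕ) :
    assocLegendre (n + 2 * k) n 0 =
      (-1) ^ (n + k) * (2 * n + 2 * k).factorial /
        (2 ^ (n + 2 * k) * (n + k).factorial * k.factorial) := by
  rw [assocLegendre, eval_zero_iterate_derivative_legendreP]
  simp only [ne_eq, OfNat.ofNat_ne_zero, not_false_eq_true, zero_pow, sub_zero, one_rpow, mul_one]
  ring

theorem assocLegendre_zero_succ (n k : ℕ) :
    (2 * k + 2) * assocLegendre (n + 2 * (k + 1)) n 0 =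
      -(2 * n + 2 * k + 1) * assocLegendre (n + 2 * k) n 0 := by
  rw [assocLegendre_add_two_mul_zero, assocLegendre_add_two_mul_zero,
    show 2 * n + 2 * (k + 1) = 2 * n + 2 * k + 1 + 1 by ring]
  simp only [← add_assoc, Nat.factorial_succ]
  push_cast
  field

end LegendreAtZero

section Normalization

variable {l : ℕ} {m : ℤ}

theorem betaLM_succ_sq (h : m.natAbs ≤ l) :
    betaLM (l + 1) m ^ 2 =
      (l + 1 - m.natAbs) * (l + 1 + m.natAbs) / ((2 * l + 1) * (2 * l + 3)) := by
  have h' : (m.natAbs : ℝ) ≤ l := by exact_mod_cast h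
  have hden : (2 * ((l + 1 : ℕ) : ℝ) - 1) * (2 * (l + 1 : ℕ) + 1) = (2 * l + 1) * (2 * l + 3) := by
    push_cast; ring
  rw [betaLM, hden, Nat.cast_add_one, sq_sqrt]
  have : (0 : ℝ) ≤ l + 1 - m.natAbs := by linarith
  positivity

theorem betaLM_succ_pos (h : m.natAbs ≤ l) : 0 < betaLM (l + 1) m := by
  have h' : (0 : ℝ) < l + 1 - m.natAbs := by
    have : (m.natAbs : ℝ) ≤ l := by exact_mod_cast h
    linarith
  refine (sqrt_nonneg _).lt_of_ne' (pow_ne_zero_iff two_ne_zero |>.mp ?_)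
  rw [← betaLM, betaLM_succ_sq h]
  positivity

theorem betaLM_sq_le (h : m.natAbs < l) :
    betaLM l m ^ 2 ≤ 3 / 2 * betaLM (l + 1) m ^ 2 := by
  obtain ⟨j, rfl⟩ := Nat.exists_eq_add_of_lt h
  rw [betaLM_succ_sq (by lia), betaLM_succ_sq (by lia)]
  push_cast
  rw [← mul_div_assoc, div_le_div_iff₀ (by positivity) (by positivity), ← sub_nonneg]
  -- With `l = |m| + j + 1` all coefficients of the difference in `|m|` and `j` are nonnegative.
  ring_nf
  positivity

theorem alphaY_succ (h : m.natAbs ≤ l) :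
    alphaY (l + 1) m =
      (2 * l + 3) / (l + 1 + m.natAbs) * betaLM (l + 1) m * alphaY l m := by
  have hratio : (2 * ((l + 1 : ℕ) : ℝ) + 1) * (l + 1 - m.natAbs).factorial /
        (4 * π * (l + 1 + m.natAbs).factorial) =
      ((2 * l + 3) / (l + 1 + m.natAbs) * betaLM (l + 1) m) ^ 2 *
        ((2 * l + 1) * (l - m.natAbs).factorial / (4 * π * (l + m.natAbs).factorial)) := by
    rw [mul_pow, betaLM_succ_sq h, Nat.sub_add_comm h, add_right_comm l, Nat.factorial_succ,
      Nat.factorial_succ]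
    push_cast [h]
    field
  have hnonneg : 0 ≤ (2 * l + 3) / (l + 1 + m.natAbs) * betaLM (l + 1) m := by
    have := betaLM_succ_pos h
    positivity
  rw [alphaY, alphaY, hratio, sqrt_mul (sq_nonneg _), sqrt_sq hnonneg]
  ring

theorem betaLM_mul_alphaY_succ (h : m.natAbs ≤ l) :
    betaLM (l + 1) m * alphaY (l + 1) m = (l + 1 - m.natAbs) / (2 * l + 1) * alphaY l m := by
  calc betaLM (l + 1) m * alphaY (l + 1) m
      = (2 * l + 3) / (l + 1 + m.natAbs) * betaLM (l + 1) m ^ 2 * alphaY l m := by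
        rw [alphaY_succ h]; ring
    _ = (l + 1 - m.natAbs) / (2 * l + 1) * alphaY l m := by
        rw [betaLM_succ_sq h]; field

theorem alphaY_sq (l : ℕ) (m : ℤ) :
    alphaY l m ^ 2 =
      (2 * l + 1) * (l - m.natAbs).factorial / (4 * π * (l + m.natAbs).factorial) := by
  rw [alphaY, mul_pow, sq_sqrt (by positivity), ← sq_abs, abs_zpow]
  simp

theorem betaLM_mul_PzeroM_succ (m : ℤ) (k : ℕ) :
    betaLM (m.natAbs + 2 * k + 2) m * PzeroM m (k + 1) =
      -(betaLM (m.natAbs + 2 * k + 1) m * PzeroM m k) := by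
  set n := m.natAbs with hn
  have hα : betaLM (n + 2 * k + 2) m * alphaY (n + 2 * k + 2) m =
      (2 * k + 2) / (2 * n + 4 * k + 3) * alphaY (n + 2 * k + 1) m := by
    rw [betaLM_mul_alphaY_succ (by lia), ← hn]
    push_cast
    ring
  have hα' : alphaY (n + 2 * k + 1) m = (2 * n + 4 * k + 3) / (2 * n + 2 * k + 1) *
      betaLM (n + 2 * k + 1) m * alphaY (n + 2 * k) m := by
    rw [alphaY_succ (by lia), ← hn]
    push_cast
    ring
  have hP : assocLegendre (n + 2 * k + 2) n 0 =
      -((2 * n + 2 * k + 1) / (2 * k + 2)) * assocLegendre (n + 2 * k) n 0 := by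
    have := assocLegendre_zero_succ n k
    rw [mul_add_one, ← add_assoc] at this
    field_simp
    linear_combination this
  rw [PzeroM, PzeroM, ← hn, mul_add_one, ← add_assoc, ← mul_assoc, hα, hα', hP]
  field

end Normalization

section TermRatio

/-- The quotient `p_{l+1} γ_l / p_{l-1}`, where `p_l = α_l^m P_l^{|m|}(0)`: with `l = |m| + 2k + 1`,
this is the ratio of the terms `k + 1` and `k` of the series `∑ k, Γ_k^m p_{|m|+2k}`. -/
def termRatio (l : ℕ) (m : ℤ) : ℝ :=
  (l + 1) / (3 * (l + 2)) * (betaLM l m / betaLM (l + 1) m) ^ 2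

theorem termRatio_nonneg (l : ℕ) (m : ℤ) : 0 ≤ termRatio l m := by
  unfold termRatio
  positivity

theorem termRatio_le_half {l : ℕ} {m : ℤ} (h : m.natAbs < l) : termRatio l m ≤ 1 / 2 := by
  have hβ : (betaLM l m / betaLM (l + 1) m) ^ 2 ≤ 3 / 2 := by
    have := betaLM_succ_pos h.le
    rw [div_pow, div_le_iff₀ (by positivity)]
    exact betaLM_sq_le h
  have hl : ((l : ℝ) + 1) / (3 * (l + 2)) ≤ 1 / 3 := by
    rw [div_le_div_iff₀ (by positivity) (by positivity)]
    linarith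
  calc termRatio l m ≤ 1 / 3 * (3 / 2) := by unfold termRatio; gcongr
    _ = 1 / 2 := by norm_num

theorem GammaKM_succ (m : ℤ) (k : ℕ) :
    GammaKM m (k + 1) = GammaKM m k * gammaLM (m.natAbs + 2 * k + 1) m := by
  rw [GammaKM, Finset.prod_Icc_succ_top (by lia), GammaKM]
  rfl

theorem GammaKM_mul_PzeroM_succ (m : ℤ) (k : ℕ) :
    GammaKM m (k + 1) * PzeroM m (k + 1) =
      termRatio (m.natAbs + 2 * k + 1) m * (GammaKM m k * PzeroM m k) := by
  have hβ : betaLM (m.natAbs + 2 * k + 2) m ≠ 0 := (betaLM_succ_pos (by lia)).ne'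
  have hP : PzeroM m (k + 1) =
      -(betaLM (m.natAbs + 2 * k + 1) m / betaLM (m.natAbs + 2 * k + 2) m) * PzeroM m k := by
    field_simp
    linear_combination betaLM_mul_PzeroM_succ m k
  rw [GammaKM_succ, gammaLM, hP, termRatio]
  field

theorem GammaKM_mul_PzeroM_eq_prod (m : ℤ) (k : ℕ) :
    GammaKM m k * PzeroM m k =
      (∏ i ∈ Finset.range k, termRatio (m.natAbs + 2 * i + 1) m) * PzeroM m 0 := by
  simpa [GammaKM] using
    eq_prod_range_mul_of_succ (t := fun k => GammaKM m k * PzeroM m k)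
      (GammaKM_mul_PzeroM_succ m) k

end TermRatio

section FirstTerm

variable (m : ℤ)

theorem PzeroM_zero_pow_four :
    PzeroM m 0 ^ 4 = (2 * m.natAbs + 1) / (16 * π ^ 2 * Wallis.W m.natAbs) := by
  have hP := assocLegendre_add_two_mul_zero m.natAbs 0
  simp only [mul_zero, add_zero, Nat.factorial_zero, Nat.cast_one, mul_one] at hP
  calc PzeroM m 0 ^ 4
      = (alphaY m.natAbs m ^ 2) ^ 2 * assocLegendre m.natAbs m.natAbs 0 ^ 4 := by
        simp only [PzeroM, mul_zero, add_zero]; ring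
    _ = (2 * m.natAbs + 1) / (16 * π ^ 2 * Wallis.W m.natAbs) := by
        rw [alphaY_sq, hP, Wallis.W_eq_factorial_ratio, Nat.sub_self, ← two_mul]
        have hsign : ((-1 : ℝ) ^ m.natAbs) ^ 4 = 1 := by rw [pow_right_comm]; norm_num
        rw [div_pow _ _ 4, mul_pow _ _ 4, hsign, Nat.factorial_zero, Nat.cast_one]
        field

theorem le_PzeroM_zero_pow_four : (8 * π ^ 3)⁻¹ * (m.natAbs + 1) ≤ PzeroM m 0 ^ 4 := by
  have hW := Wallis.W_pos m.natAbs
  calc (8 * π ^ 3)⁻¹ * (m.natAbs + 1)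
      ≤ (2 * m.natAbs + 1) / (16 * π ^ 2 * (π / 2)) := by
        rw [inv_mul_eq_div, show 16 * π ^ 2 * (π / 2) = 8 * π ^ 3 by ring]
        gcongr
        linarith [(m.natAbs).cast_nonneg (α := ℝ)]
    _ ≤ (2 * m.natAbs + 1) / (16 * π ^ 2 * Wallis.W m.natAbs) := by
        gcongr
        exact Wallis.W_le _
    _ = PzeroM m 0 ^ 4 := (PzeroM_zero_pow_four m).symm

theorem PzeroM_zero_pow_four_le : PzeroM m 0 ^ 4 ≤ (4 * π ^ 3)⁻¹ * (m.natAbs + 1) := by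
  calc PzeroM m 0 ^ 4
      = (2 * m.natAbs + 1) / (16 * π ^ 2 * Wallis.W m.natAbs) := PzeroM_zero_pow_four m
    _ ≤ (2 * m.natAbs + 1) /
          (16 * π ^ 2 * ((2 * m.natAbs + 1) / (2 * m.natAbs + 2) * (π / 2))) := by
        gcongr
        exact Wallis.le_W _
    _ = (4 * π ^ 3)⁻¹ * (m.natAbs + 1) := by field

theorem le_abs_PzeroM_zero :
    (8 * π ^ 3)⁻¹ ^ (1 / 4 : ℝ) * (m.natAbs + 1) ^ (1 / 4 : ℝ) ≤ |PzeroM m 0| := by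
  rw [← mul_rpow (by positivity) (by positivity), one_div,
    rpow_inv_le_iff_of_pos (by positivity) (abs_nonneg _) four_pos]
  exact_mod_cast (le_PzeroM_zero_pow_four m).trans_eq (Even.pow_abs (by decide) _).symm

theorem abs_PzeroM_zero_le :
    |PzeroM m 0| ≤ (4 * π ^ 3)⁻¹ ^ (1 / 4 : ℝ) * (m.natAbs + 1) ^ (1 / 4 : ℝ) := by
  rw [← mul_rpow (by positivity) (by positivity), one_div,
    le_rpow_inv_iff_of_pos (abs_nonneg _) (by positivity) four_pos]
  exact_mod_cast (Even.pow_abs (by decide) _).trans_le (PzeroM_zero_pow_four_le m)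

end FirstTerm

/-- estimate (3.6) of Lemma 3.1:
`c (|m|+1)^{1/4} ≤ |Σ_k Γ_k^m α_{|m|+2k}^m P_{|m|+2k}^{|m|}(0)| ≤ C (|m|+1)^{1/4}`;
in particular the sum is nonzero. -/
theorem Gamma_alpha_P_sum_bounds :
    ∃ c > 0, ∃ C > 0, ∀ m : ℤ,
      Summable (fun k : ℕ => GammaKM m k * PzeroM m k) ∧
      c * ((m.natAbs : ℝ) + 1) ^ ((1 : ℝ) / 4) ≤ |∑' k : ℕ, GammaKM m k * PzeroM m k| ∧
      |∑' k : ℕ, GammaKM m k * PzeroM m k| ≤ C * ((m.natAbs : ℝ) + 1) ^ ((1 : ℝ) / 4) ∧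
      (∑' k : ℕ, GammaKM m k * PzeroM m k) ≠ 0 := by
  refine ⟨(8 * π ^ 3)⁻¹ ^ (1 / 4 : ℝ), by positivity,
    2 * (4 * π ^ 3)⁻¹ ^ (1 / 4 : ℝ), by positivity, fun m => ?_⟩
  set ρ : ℕ → ℝ := fun k => termRatio (m.natAbs + 2 * k + 1) m
  have hρ (k : ℕ) : 0 ≤ ρ k := termRatio_nonneg _ m
  have hρ_le (k : ℕ) : ρ k ≤ 1 / 2 := termRatio_le_half (by lia)
  have hs : Summable fun k => ∏ i ∈ Finset.range k, ρ i :=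
    summable_prod_range hρ hρ_le one_half_lt_one
  have hge : 1 ≤ ∑' k, ∏ i ∈ Finset.range k, ρ i := one_le_tsum_prod_range hρ hs
  have hle : ∑' k, ∏ i ∈ Finset.range k, ρ i ≤ 2 :=
    (tsum_prod_range_le hρ hρ_le one_half_lt_one).trans_eq (by norm_num)
  have hfirst : 0 < |PzeroM m 0| := lt_of_lt_of_le (by positivity) (le_abs_PzeroM_zero m)
  have hpos : 0 < ∑' k, ∏ i ∈ Finset.range k, ρ i := zero_lt_one.trans_le hge
  have hterm (k : ℕ) : GammaKM m k * PzeroM m k = (∏ i ∈ Finset.range k, ρ i) * PzeroM m 0 :=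
    GammaKM_mul_PzeroM_eq_prod m k
  simp_rw [hterm, tsum_mul_right, abs_mul, abs_of_pos hpos]
  rw [mul_assoc]
  exact ⟨hs.mul_right _,
    (le_abs_PzeroM_zero m).trans (le_mul_of_one_le_left (abs_nonneg _) hge),
    mul_le_mul hle (abs_PzeroM_zero_le m) (abs_nonneg _) zero_le_two,
    mul_ne_zero hpos.ne' (abs_pos.mp hfirst)⟩

end
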